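/- Let φ:[0,1]→ℝ² be absolutely continuous with ∫₀¹ Λ*(φ'(t)) dt < ∞, and let w ∈ ℝ² be any vector with ‖w‖ = L(φ). Then ∫₀¹ Λ*(φ'(t)) dt ≥ Λ*(w), with equality if and only if φ has constant speed, i.e. ‖φ'(t)‖ = L(φ) for almost every t ∈ [0,1]. -/

import Mathlib

open MeasureTheory Set Filter Topology
open scoped ENNReal RealInnerProductSpace

noncomputable section

/-- The Euclidean plane. -/
abbrev E2 := EuclideanSpace ℝ (Fin 2)

/-- The uniform probability measure on a set `A` (normalized Lebesgue measure). -/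
def uniformOn {α : Type*} [MeasureSpace α] (A : Set α) : Measure α :=
  (volume A)⁻¹ • volume.restrict A

/-- The logarithmic moment generating function `Λ` of the uniform probability measure on the
open disk of radius `R` centered at the origin. -/
def logMGF (R : ℝ) (η : E2) : ℝ :=
  Real.log (∫ x, Real.exp (⟪x, η⟫) ∂(uniformOn (Metric.ball (0 : E2) R)))

/-- The Fenchel–Legendre transform `Λ*` of `logMGF R`, valued in `[0,∞]`.  Since the supremum
includes `η = 0` (where the value is `0`), truncating negative values does not change it. -/
def lambdaStar (R : ℝ) (y : E2) : ℝ≥0∞ :=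
  ⨆ η : E2, ENNReal.ofReal (⟪y, η⟫ - logMGF R η)

section Variation

variable {E : Type*} [NormedAddCommGroup E] [NormedSpace ℝ E] {φ g : ℝ → E} {a b : ℝ}

theorem norm_sub_le_integral_norm_of_eq_integral
    (hint : IntervalIntegrable g volume a b)
    (hφ : ∀ t ∈ Icc a b, φ t = φ a + ∫ s in a..t, g s) {x y : ℝ}
    (hx : x ∈ Icc a b) (hy : y ∈ Icc a b) (hxy : x ≤ y) :
    ‖φ y - φ x‖ ≤ (∫ s in a..y, ‖g s‖) - ∫ s in a..x, ‖g s‖ := by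
  have hab : a ≤ b := hx.1.trans hx.2
  have hi {t : ℝ} (ht : t ∈ Icc a b) : IntervalIntegrable g volume a t :=
    hint.mono_set (by rw [uIcc_of_le hab, uIcc_of_le ht.1]; exact Icc_subset_Icc_right ht.2)
  rw [hφ y hy, hφ x hx, add_sub_add_left_eq_sub,
    intervalIntegral.integral_interval_sub_left (hi hy) (hi hx),
    intervalIntegral.integral_interval_sub_left (hi hy).norm (hi hx).norm]
  exact intervalIntegral.norm_integral_le_integral_norm hxy

theorem eVariationOn_le_ofReal_integral_norm (hab : a ≤ b)
    (hint : IntervalIntegrable g volume a b)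
    (hφ : ∀ t ∈ Icc a b, φ t = φ a + ∫ s in a..t, g s) :
    eVariationOn φ (Icc a b) ≤ ENNReal.ofReal (∫ s in a..b, ‖g s‖) := by
  set Φ : ℝ → ℝ := fun t ↦ ∫ s in a..t, ‖g s‖ with hΦ
  have key {x y : ℝ} (hx : x ∈ Icc a b) (hy : y ∈ Icc a b) (hxy : x ≤ y) :
      ‖φ y - φ x‖ ≤ Φ y - Φ x :=
    norm_sub_le_integral_norm_of_eq_integral hint hφ hx hy hxy
  have hmono : MonotoneOn Φ (Icc a b) := fun x hx y hy hxy ↦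
    sub_nonneg.1 ((norm_nonneg _).trans (key hx hy hxy))
  calc eVariationOn φ (Icc a b) ≤ eVariationOn Φ (Icc a b) := by
        refine iSup_le fun p ↦ le_iSup_of_le p (Finset.sum_le_sum fun i _ ↦ ?_)
        rw [edist_dist, edist_dist, dist_eq_norm, dist_eq_norm]
        exact ENNReal.ofReal_le_ofReal ((key (p.2.2.2 i) (p.2.2.2 (i + 1))
          (p.2.2.1 i.le_succ)).trans (le_abs_self _))
    _ ≤ ENNReal.ofReal (Φ b - Φ a) := by
        simpa using (hmono.eVariationOn_eq (left_mem_Icc.2 hab) (right_mem_Icc.2 hab)).le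
    _ = _ := by simp [hΦ]

theorem toReal_eVariationOn_eq_integral_norm [CompleteSpace E] (hab : a ≤ b)
    (hint : IntervalIntegrable g volume a b)
    (hφ : ∀ t ∈ Icc a b, φ t = φ a + ∫ s in a..t, g s) :
    (eVariationOn φ (Icc a b)).toReal = ∫ s in a..b, ‖g s‖ := by
  have hle := eVariationOn_le_ofReal_integral_norm hab hint hφ
  have hbv : BoundedVariationOn φ (Icc a b) := (hle.trans_lt ENNReal.ofReal_lt_top).ne
  refine le_antisymm (ENNReal.toReal_le_of_le_ofReal
    (intervalIntegral.integral_nonneg hab fun _ _ ↦ norm_nonneg _) hle) ?_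
  set V : ℝ → ℝ := variationOnFromTo φ (Icc a b) a with hV
  have hmono : MonotoneOn V (Icc a b) :=
    variationOnFromTo.monotoneOn hbv.locallyBoundedVariationOn (left_mem_Icc.2 hab)
  have hmono' : MonotoneOn V (uIcc a b) := by rwa [uIcc_of_le hab]
  have hdist {x y : ℝ} (hx : x ∈ Icc a b) (hy : y ∈ Icc a b) (hxy : x ≤ y) :
      ‖φ y - φ x‖ ≤ V y - V x := by
    rw [hV, variationOnFromTo.sub_right hbv.locallyBoundedVariationOn (left_mem_Icc.2 hab) hy hx,
      variationOnFromTo.eq_of_le _ _ hxy, ← dist_eq_norm, dist_edist]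
    exact ENNReal.toReal_mono (hbv.mono inter_subset_left)
      (eVariationOn.edist_le _ ⟨hy, right_mem_Icc.2 hxy⟩ ⟨hx, left_mem_Icc.2 hxy⟩)
  have hderiv : ∀ᵐ x ∂volume.restrict (Icc a b), ‖g x‖ ≤ deriv V x := by
    rw [← restrict_Ioo_eq_restrict_Icc, ae_restrict_iff' measurableSet_Ioo]
    filter_upwards [hmono.ae_differentiableWithinAt_of_mem, hint.ae_hasDerivAt_integral]
      with x hVx hgx hx
    have hxI := Ioo_subset_Icc_self hx
    have hnhds : Icc a b ∈ 𝓝 x := Icc_mem_nhds hx.1 hx.2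
    have hV' := ((hVx hxI).differentiableAt hnhds).hasDerivAt.tendsto_slope
    have hφ' : HasDerivAt φ (g x) x := by
      refine ((hgx (by rwa [uIcc_of_le hab]) a left_mem_uIcc).const_add (φ a)).congr_of_eventuallyEq
        ?_
      filter_upwards [hnhds] with t ht using hφ t ht
    refine le_of_tendsto_of_tendsto hφ'.tendsto_slope.norm hV' ?_
    filter_upwards [nhdsWithin_le_nhds hnhds] with y hy
    rw [slope_def_module, slope_def_field, norm_smul, norm_inv, Real.norm_eq_abs, div_eq_inv_mul]
    rcases le_total x y with h | h
    · rw [abs_of_nonneg (sub_nonneg.2 h)]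
      exact mul_le_mul_of_nonneg_left (hdist hxI hy h) (inv_nonneg.2 (sub_nonneg.2 h))
    · rw [abs_of_nonpos (sub_nonpos.2 h), norm_sub_rev, inv_neg, neg_mul, ← mul_neg]
      exact mul_le_mul_of_nonpos_left (by linarith [hdist hy hxI h])
        (inv_nonpos.2 (sub_nonpos.2 h))
  calc ∫ s in a..b, ‖g s‖ ≤ ∫ s in a..b, deriv V s :=
        intervalIntegral.integral_mono_ae_restrict hab hint.norm hmono'.intervalIntegrable_deriv
          hderiv
    _ ≤ V b - V a := by
        have h := hmono'.intervalIntegral_deriv_mem_uIcc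
        rw [uIcc_of_le (sub_nonneg.2 (hmono (left_mem_Icc.2 hab) (right_mem_Icc.2 hab) hab))] at h
        exact h.2
    _ = _ := by
        rw [hV, variationOnFromTo.self, sub_zero, variationOnFromTo.eq_of_le _ _ hab, inter_self]

end Variation

section Disk

open ProbabilityTheory hiding uniformOn

variable {R : ℝ}

theorem isProbabilityMeasure_uniformOn_ball (hR : 0 < R) :
    IsProbabilityMeasure (uniformOn (Metric.ball (0 : E2) R)) := by
  refine ⟨?_⟩
  rw [uniformOn, Measure.smul_apply, Measure.restrict_apply_univ, smul_eq_mul]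
  exact ENNReal.inv_mul_cancel (Metric.measure_ball_pos _ _ hR).ne' measure_ball_lt_top.ne

theorem ae_norm_lt_uniformOn_ball : ∀ᵐ x ∂uniformOn (Metric.ball (0 : E2) R), ‖x‖ < R := by
  refine Measure.ae_smul_measure ?_ _
  filter_upwards [ae_restrict_mem measurableSet_ball] with x hx
  simpa using hx

theorem logMGF_map (A : E2 ≃ₗᵢ[ℝ] E2) (η : E2) : logMGF R (A η) = logMGF R η := by
  have h := A.measurePreserving.setIntegral_preimage_emb
    A.toHomeomorph.measurableEmbedding (fun x ↦ Real.exp ⟪x, A η⟫) (Metric.ball (0 : E2) R)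
  have hpre : A ⁻¹' Metric.ball (0 : E2) R = Metric.ball 0 R := by
    ext x; simp
  simp only [hpre, LinearIsometryEquiv.inner_map_map] at h
  simp only [logMGF, uniformOn, integral_smul_measure, h]

theorem logMGF_eq_of_norm_eq {η ξ : E2} (h : ‖η‖ = ‖ξ‖) : logMGF R η = logMGF R ξ := by
  rw [← Submodule.reflection_sub h, logMGF_map]

/-- A fixed unit vector of the plane. -/
def unitVec : E2 := EuclideanSpace.single 0 1

@[simp]
theorem norm_unitVec : ‖unitVec‖ = 1 := by simp [unitVec]

/-- The cumulant generating function of a one-dimensional marginal of the uniform distribution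
on the disk of radius `R`. -/
def marginalCGF (R : ℝ) : ℝ → ℝ :=
  cgf (fun x : E2 ↦ ⟪x, unitVec⟫) (uniformOn (Metric.ball (0 : E2) R))

theorem marginalCGF_eq_logMGF (s : ℝ) : marginalCGF R s = logMGF R (s • unitVec) := by
  simp only [marginalCGF, cgf, mgf, logMGF, inner_smul_right]

theorem logMGF_eq_marginalCGF {η : E2} {s : ℝ} (h : ‖η‖ = |s|) :
    logMGF R η = marginalCGF R s := by
  rw [marginalCGF_eq_logMGF]
  exact logMGF_eq_of_norm_eq (by simp [norm_smul, h])

theorem marginalCGF_abs (s : ℝ) : marginalCGF R |s| = marginalCGF R s := by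
  rw [marginalCGF_eq_logMGF]
  exact logMGF_eq_marginalCGF (by simp [norm_smul])

theorem lambdaStar_eq_iSup (y : E2) :
    lambdaStar R y = ⨆ s : ℝ, ENNReal.ofReal (‖y‖ * s - marginalCGF R s) := by
  refine le_antisymm (iSup_le fun η ↦ le_iSup_of_le ‖η‖ (ENNReal.ofReal_le_ofReal ?_))
    (iSup_le fun s ↦ ?_)
  · rw [logMGF_eq_marginalCGF (abs_norm η).symm]
    gcongr
    exact real_inner_le_norm y η
  · obtain ⟨u, hu, hy⟩ : ∃ u : E2, ‖u‖ = 1 ∧ y = ‖y‖ • u := by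
      rcases eq_or_ne y 0 with rfl | h
      · exact ⟨unitVec, by simp⟩
      · exact ⟨‖y‖⁻¹ • y, by simp [norm_smul, h], by simp [smul_smul, h]⟩
    refine le_iSup_of_le (s • u) (ENNReal.ofReal_le_ofReal (le_of_eq ?_))
    rw [logMGF_eq_marginalCGF (s := s) (by simp [norm_smul, hu])]
    congr 1
    nth_rw 2 [hy]
    simp [inner_smul_left, inner_smul_right, hu, mul_comm]

theorem abs_inner_unitVec_le (x : E2) : |⟪x, unitVec⟫| ≤ ‖x‖ := by
  simpa using abs_real_inner_le_norm x unitVec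

theorem measurable_inner_unitVec : Measurable fun x : E2 ↦ ⟪x, unitVec⟫ :=
  (continuous_id.inner continuous_const).measurable

theorem integrable_exp_mul_inner_unitVec (hR : 0 < R) (s : ℝ) :
    Integrable (fun x : E2 ↦ Real.exp (s * ⟪x, unitVec⟫))
      (uniformOn (Metric.ball (0 : E2) R)) := by
  have := isProbabilityMeasure_uniformOn_ball hR
  refine integrable_exp_mul_of_mem_Icc (a := -R) (b := R) measurable_inner_unitVec.aemeasurable ?_
  filter_upwards [ae_norm_lt_uniformOn_ball] with x hx
  exact abs_le.1 ((abs_inner_unitVec_le x).trans hx.le)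

theorem differentiable_marginalCGF (hR : 0 < R) : Differentiable ℝ (marginalCGF R) := fun s ↦ by
  have h : integrableExpSet (fun x : E2 ↦ ⟪x, unitVec⟫) (uniformOn (Metric.ball (0 : E2) R)) =
      univ := eq_univ_of_forall (integrable_exp_mul_inner_unitVec hR)
  exact (analyticAt_cgf (by simp [h])).differentiableAt

theorem exists_forall_mul_sub_marginalCGF_le (hR : 0 < R) {m : ℝ} (hm₀ : 0 ≤ m) (hm : m < R) :
    ∃ s, ∀ t, m * t - marginalCGF R t ≤ m * s - marginalCGF R s := by
  have := isProbabilityMeasure_uniformOn_ball hR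
  set μ := uniformOn (Metric.ball (0 : E2) R) with hμ
  set r := (m + R) / 2 with hr
  set c := μ.real {x | r ≤ ⟪x, unitVec⟫} with hc
  have hcpos : 0 < c := by
    have hopen : IsOpen ({x : E2 | r < ⟪x, unitVec⟫} ∩ Metric.ball 0 R) :=
      (isOpen_lt continuous_const (continuous_id.inner continuous_const)).inter Metric.isOpen_ball
    have hne : ({x : E2 | r < ⟪x, unitVec⟫} ∩ Metric.ball 0 R).Nonempty := by
      refine ⟨((r + R) / 2) • unitVec, ?_, ?_⟩
      · simp only [mem_ofPred_eq, inner_smul_left, real_inner_self_eq_norm_sq, norm_unitVec,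
          conj_trivial, one_pow, mul_one]
        linarith
      · rw [mem_ball_zero_iff, norm_smul, norm_unitVec, mul_one, Real.norm_eq_abs, abs_lt]
        constructor <;> linarith
    have hsub : {x : E2 | r < ⟪x, unitVec⟫} ⊆ {x | r ≤ ⟪x, unitVec⟫} := by
      intro x hx
      rw [mem_ofPred_eq] at hx ⊢
      exact hx.le
    refine ENNReal.toReal_pos (ne_of_gt ?_) (measure_ne_top _ _)
    refine lt_of_lt_of_le ?_ (measure_mono hsub)
    rw [hμ, uniformOn, Measure.smul_apply, smul_eq_mul,
      Measure.restrict_apply' measurableSet_ball]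
    exact ENNReal.mul_pos (ENNReal.inv_ne_zero.2 measure_ball_lt_top.ne)
      (hopen.measure_pos _ hne).ne'
  have hbound (t : ℝ) : m * t - marginalCGF R t ≤ -Real.log c + -(r - m) * |t| := by
    have h := measure_ge_le_exp_cgf r (abs_nonneg t) (integrable_exp_mul_inner_unitVec hR |t|)
    rw [← hμ, ← hc, ← Real.log_le_iff_le_exp hcpos] at h
    change _ ≤ -|t| * r + marginalCGF R |t| at h
    rw [marginalCGF_abs] at h
    nlinarith [mul_le_mul_of_nonneg_left (le_abs_self t) hm₀]
  refine Continuous.exists_forall_ge ((continuous_const.mul continuous_id).sub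
    (differentiable_marginalCGF hR).continuous) (tendsto_atBot_mono hbound ?_)
  exact tendsto_atBot_add_const_left _ _
    (tendsto_norm_cocompact_atTop.const_mul_atTop_of_neg (by linarith))

theorem tendsto_mul_sub_marginalCGF_atTop (hR : 0 < R) :
    Tendsto (fun s ↦ R * s - marginalCGF R s) atTop atTop := by
  have := isProbabilityMeasure_uniformOn_ball hR
  set μ := uniformOn (Metric.ball (0 : E2) R) with hμ
  have hlim : Tendsto (fun s : ℝ ↦ ∫ x : E2, Real.exp (s * (⟪x, unitVec⟫ - R)) ∂μ) atTop
      (𝓝 0) := by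
    have hneg : ∀ᵐ x ∂μ, ⟪x, unitVec⟫ - R < 0 := by
      filter_upwards [ae_norm_lt_uniformOn_ball] with x hx
      linarith [le_abs_self ⟪x, unitVec⟫, abs_inner_unitVec_le x]
    rw [← integral_zero E2 ℝ (μ := μ)]
    refine tendsto_integral_filter_of_dominated_convergence (fun _ ↦ 1)
      (Eventually.of_forall fun s ↦ ?_) ?_ (integrable_const _) ?_
    · exact (Real.measurable_exp.comp
        ((measurable_inner_unitVec.sub_const R).const_mul s)).aestronglyMeasurable
    · filter_upwards [eventually_ge_atTop 0] with s hs
      filter_upwards [hneg] with x hx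
      rw [Real.norm_eq_abs, Real.abs_exp, Real.exp_le_one_iff]
      exact mul_nonpos_of_nonneg_of_nonpos hs hx.le
    · filter_upwards [hneg] with x hx
      exact Real.tendsto_exp_atBot.comp (tendsto_id.atTop_mul_const_of_neg hx)
  have hpos (s : ℝ) : 0 < mgf (fun x : E2 ↦ ⟪x, unitVec⟫) μ s :=
    mgf_pos (integrable_exp_mul_inner_unitVec hR s)
  have heq (s : ℝ) : ∫ x : E2, Real.exp (s * (⟪x, unitVec⟫ - R)) ∂μ =
      Real.exp (-(R * s - marginalCGF R s)) := by
    rw [neg_sub, Real.exp_sub, marginalCGF, cgf, Real.exp_log (hpos s), mgf, ← integral_div]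
    congr with x
    rw [← Real.exp_sub]
    ring_nf
  simp only [heq] at hlim
  simpa [Function.comp_def] using
    tendsto_neg_atBot_atTop.comp (Real.tendsto_exp_comp_nhds_zero.1 hlim)

theorem norm_lt_of_lambdaStar_ne_top (hR : 0 < R) {y : E2} (hy : lambdaStar R y ≠ ⊤) :
    ‖y‖ < R := by
  by_contra! h
  refine hy (top_le_iff.1 (le_of_tendsto
    (ENNReal.tendsto_ofReal_atTop.comp (tendsto_mul_sub_marginalCGF_atTop hR)) ?_))
  filter_upwards [eventually_ge_atTop 0] with s hs
  rw [lambdaStar_eq_iSup]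
  exact le_iSup_of_le s (ENNReal.ofReal_le_ofReal
    (sub_le_sub_right (mul_le_mul_of_nonneg_right h hs) _))

theorem measurable_lambdaStar : Measurable (lambdaStar R) := by
  refine (lowerSemicontinuous_iSup fun η ↦ Continuous.lowerSemicontinuous ?_).measurable
  exact ENNReal.continuous_ofReal.comp (by fun_prop)

theorem mul_sub_marginalCGF_le_toReal {y : E2} (hy : lambdaStar R y ≠ ⊤) (s : ℝ) :
    ‖y‖ * s - marginalCGF R s ≤ (lambdaStar R y).toReal := by
  refine (ENNReal.ofReal_le_iff_le_toReal hy).1 ?_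
  rw [lambdaStar_eq_iSup]
  exact le_iSup (fun s ↦ ENNReal.ofReal (‖y‖ * s - marginalCGF R s)) s

theorem eq_deriv_marginalCGF (hR : 0 < R) {r s : ℝ}
    (h : ∀ t, r * t - marginalCGF R t ≤ r * s - marginalCGF R s) :
    r = deriv (marginalCGF R) s := by
  have hmax : IsLocalMax (fun t ↦ r * t - marginalCGF R t) s := Eventually.of_forall h
  have hd : HasDerivAt (fun t ↦ r * t - marginalCGF R t) (r * 1 - deriv (marginalCGF R) s) s :=
    ((hasDerivAt_id s).const_mul r).sub (differentiable_marginalCGF hR s).hasDerivAt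
  linarith [hmax.hasDerivAt_eq_zero hd]

section Jensen

variable {Ω : Type*} [MeasurableSpace Ω] {P : Measure Ω} {g : Ω → E2}
  {w : E2}

theorem aemeasurable_lambdaStar_comp (hint : Integrable g P) :
    AEMeasurable (fun t ↦ lambdaStar R (g t)) P :=
  measurable_lambdaStar.comp_aemeasurable hint.aemeasurable

theorem integrable_toReal_lambdaStar (hint : Integrable g P)
    (hfin : ∫⁻ t, lambdaStar R (g t) ∂P ≠ ⊤) :
    Integrable (fun t ↦ (lambdaStar R (g t)).toReal) P :=
  integrable_toReal_of_lintegral_ne_top (aemeasurable_lambdaStar_comp hint) hfin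

theorem ae_lambdaStar_ne_top (hint : Integrable g P)
    (hfin : ∫⁻ t, lambdaStar R (g t) ∂P ≠ ⊤) : ∀ᵐ t ∂P, lambdaStar R (g t) ≠ ⊤ := by
  filter_upwards [ae_lt_top' (aemeasurable_lambdaStar_comp hint) hfin]
    with t ht using ht.ne

theorem integral_toReal_lambdaStar (hint : Integrable g P)
    (hfin : ∫⁻ t, lambdaStar R (g t) ∂P ≠ ⊤) :
    ∫ t, (lambdaStar R (g t)).toReal ∂P = (∫⁻ t, lambdaStar R (g t) ∂P).toReal :=
  integral_toReal (aemeasurable_lambdaStar_comp hint)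
    ((ae_lambdaStar_ne_top hint hfin).mono fun _ h ↦ h.lt_top)

variable [IsProbabilityMeasure P]

theorem integral_norm_mul_sub (hint : Integrable g P) (s : ℝ) :
    ∫ t, (‖g t‖ * s - marginalCGF R s) ∂P = (∫ t, ‖g t‖ ∂P) * s - marginalCGF R s := by
  rw [integral_sub (hint.norm.mul_const s) (integrable_const _), integral_mul_const]
  simp

theorem lambdaStar_le_lintegral (hint : Integrable g P) (hw : ‖w‖ = ∫ t, ‖g t‖ ∂P) :
    lambdaStar R w ≤ ∫⁻ t, lambdaStar R (g t) ∂P := by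
  by_cases hfin : ∫⁻ t, lambdaStar R (g t) ∂P = ⊤
  · simp [hfin]
  rw [lambdaStar_eq_iSup]
  refine iSup_le fun s ↦ ?_
  rw [hw, ← integral_norm_mul_sub hint, ENNReal.ofReal_le_iff_le_toReal hfin,
    ← integral_toReal_lambdaStar hint hfin]
  refine integral_mono_ae ((hint.norm.mul_const s).sub (integrable_const _))
    (integrable_toReal_lambdaStar hint hfin) ?_
  filter_upwards [ae_lambdaStar_ne_top hint hfin] with t ht
  exact mul_sub_marginalCGF_le_toReal ht s

theorem lintegral_lambdaStar_eq_iff (hR : 0 < R) (hint : Integrable g P)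
    (hfin : ∫⁻ t, lambdaStar R (g t) ∂P ≠ ⊤) (hw : ‖w‖ = ∫ t, ‖g t‖ ∂P) :
    ∫⁻ t, lambdaStar R (g t) ∂P = lambdaStar R w ↔ ∀ᵐ t ∂P, ‖g t‖ = ‖w‖ := by
  refine ⟨fun heq ↦ ?_, fun h ↦ ?_⟩
  · have hwtop : lambdaStar R w ≠ ⊤ := heq ▸ hfin
    obtain ⟨s, hs⟩ := exists_forall_mul_sub_marginalCGF_le hR (norm_nonneg w)
      (norm_lt_of_lambdaStar_ne_top hR hwtop)
    have hws : (lambdaStar R w).toReal = ‖w‖ * s - marginalCGF R s := by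
      refine le_antisymm ?_ (mul_sub_marginalCGF_le_toReal hwtop s)
      refine ENNReal.toReal_le_of_le_ofReal ?_ ?_
      · simpa [marginalCGF, cgf, mgf, (isProbabilityMeasure_uniformOn_ball hR).measure_univ,
          measureReal_def] using hs 0
      · rw [lambdaStar_eq_iSup]
        exact iSup_le fun t ↦ ENNReal.ofReal_le_ofReal (hs t)
    have hle : (fun t ↦ ‖g t‖ * s - marginalCGF R s) ≤ᵐ[P]
        fun t ↦ (lambdaStar R (g t)).toReal := by
      filter_upwards [ae_lambdaStar_ne_top hint hfin] with t ht
      exact mul_sub_marginalCGF_le_toReal ht s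
    have hae := (integral_eq_iff_of_ae_le ((hint.norm.mul_const s).sub (integrable_const _))
      (integrable_toReal_lambdaStar hint hfin) hle).1 (by
        rw [integral_toReal_lambdaStar hint hfin, heq, hws, hw]
        exact integral_norm_mul_sub hint s)
    filter_upwards [hae, ae_lambdaStar_ne_top hint hfin] with t ht htop
    rw [eq_deriv_marginalCGF hR hs]
    refine eq_deriv_marginalCGF hR fun u ↦ ?_
    exact (mul_sub_marginalCGF_le_toReal htop u).trans_eq ht.symm
  · have : (fun t ↦ lambdaStar R (g t)) =ᵐ[P] fun _ ↦ lambdaStar R w := by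
      filter_upwards [h] with t ht
      rw [lambdaStar_eq_iSup, lambdaStar_eq_iSup, ht]
    rw [lintegral_congr_ae this]
    simp

end Jensen

end Disk

/-- Jensen's inequality for the rate: if `φ` is absolutely continuous with
derivative `g`, finite rate, and `w` is any vector with `‖w‖ = L(φ)`, then
`∫₀¹ Λ*(g(t)) dt ≥ Λ*(w)`, with equality iff `φ` has constant speed `‖g(t)‖ = L(φ)` a.e. -/
theorem statement12 (R : ℝ) (hR : 0 < R) (φ g : ℝ → E2)
    (hint : IntegrableOn g (Set.Icc 0 1) volume)
    (hAC : ∀ t ∈ Set.Icc (0:ℝ) 1, φ t = φ 0 + ∫ s in (0:ℝ)..t, g s)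
    (hfin : (∫⁻ t in Set.Icc (0:ℝ) 1, lambdaStar R (g t)) < ⊤)
    (w : E2) (hw : ‖w‖ = (eVariationOn φ (Set.Icc 0 1)).toReal) :
    lambdaStar R w ≤ (∫⁻ t in Set.Icc (0:ℝ) 1, lambdaStar R (g t)) ∧
    ((∫⁻ t in Set.Icc (0:ℝ) 1, lambdaStar R (g t)) = lambdaStar R w ↔
      ∀ᵐ t ∂(volume.restrict (Set.Icc (0:ℝ) 1)),
        ‖g t‖ = (eVariationOn φ (Set.Icc 0 1)).toReal) := by
  have : IsProbabilityMeasure (volume.restrict (Icc (0 : ℝ) 1)) := ⟨by simp⟩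
  have hL : (eVariationOn φ (Icc 0 1)).toReal = ∫ t in Icc (0 : ℝ) 1, ‖g t‖ := by
    rw [toReal_eVariationOn_eq_integral_norm zero_le_one
      ((intervalIntegrable_iff_integrableOn_Icc_of_le zero_le_one).2 hint) hAC,
      intervalIntegral.integral_of_le zero_le_one, integral_Icc_eq_integral_Ioc]
  rw [← hw]
  exact ⟨lambdaStar_le_lintegral hint (hw.trans hL),
    lintegral_lambdaStar_eq_iff hR hint hfin.ne (hw.trans hL)⟩
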